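/- Let G be a finite 2-group admitting a subnormal series G = G₀ > G₁ > ⋯ > G_{r-1} > G_r = 1 with G_i normal in G_{i-1}, such that every factor Q_i = G_{i-1}/G_i is abelian. Let I ⊆ {2,…,r} be the set of indices k such that Q_k has a subgroup isomorphic to C_{e_k} × C_{e_k}, where e_k = exp Q_k and C_n denotes the cyclic group of order n. Then exp M(G) divides 2^{|I|} · (∏_{j=2}^{r} exp Q_j) · exp M(Q₁). -/

import Mathlib

/-!
Let `α` be a 2-cocycle on `G` and `Γ` the central extension of `G` by `ℂˣ` that it defines
(`CocycleExt`).  Write `A i ≤ Γ` for the preimage of `G_i`, so that `A r` is the central copy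
of `ℂˣ`.

The key point is that a power map is a homomorphism `A i → ℂˣ` for a small exponent
(`PowHomInto`).  Suppose `b ↦ b ^ m` is a homomorphism from `B = A (i + 1)` to the centre.
It is invariant under conjugation, so `c(x, y) = ⁅x, y⁆ ^ m` is bimultiplicative on `A = A i` and
trivial as soon as one argument lies in `B`; in particular `c ^ e = 1` for `e = exp (A / B)`.
Collecting commutators gives `((x * y) ^ n) ^ m = (x ^ n) ^ m * (y ^ n) ^ m * c(y, x) ^ (n.choose 2)`
whenever `x ^ n` and `y ^ n` lie in `B`.  Hence `x ↦ x ^ (2 * e * m)` is a homomorphism on `A`, and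
so is `x ↦ x ^ (e * m)` unless some value of `c` has order exactly `e` (as `e` is a power of `2`).
In that exceptional case the images of `x` and `y` in `A / B` generate a copy of `C_e × C_e`
(`powHomInto_step`).

Descending induction yields a homomorphism `x ↦ x ^ M` on `A 1` into `ℂˣ` with
`M = 2 ^ |I| * ∏_{j ≥ 2} exp Q_j`.  Being a power map it is invariant under all of `Γ`, although
the `A i` with `i ≥ 2` need not be normal in `Γ`.  Since it restricts to `z ↦ z ^ M` on `ℂˣ`,
the cocycle `α ^ M` is cohomologous to one inflated from `Q₁ = Γ / A 1`
(`exists_inflation`), and raising to the power `exp M(Q₁)` kills its class.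
-/

def IsCocycle {G : Type*} [Group G] (α : G → G → ℂˣ) : Prop :=
  ∀ x y z : G, α x y * α (x * y) z = α x (y * z) * α y z

/-- The group of 2-cocycles on `G` with values in `ℂˣ` (trivial action). -/
def Z2 (G : Type*) [Group G] : Subgroup (G → G → ℂˣ) where
  carrier := {α | IsCocycle α}
  one_mem' := by intro x y z; simp
  mul_mem' := by
    intro a b ha hb x y z
    simp only [Pi.mul_apply]
    rw [mul_mul_mul_comm, ha x y z, hb x y z, mul_mul_mul_comm]
  inv_mem' := by
    intro a ha x y z
    simp only [Pi.inv_apply]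
    rw [← mul_inv, ha x y z, mul_inv]

/-- The group of 2-coboundaries on `G` with values in `ℂˣ`. -/
def B2 (G : Type*) [Group G] : Subgroup (G → G → ℂˣ) where
  carrier := {α | ∃ ζ : G → ℂˣ, ∀ x y : G, α x y = ζ x * ζ y * (ζ (x * y))⁻¹}
  one_mem' := ⟨1, by simp⟩
  mul_mem' := by
    rintro a b ⟨ζ, hζ⟩ ⟨ξ, hξ⟩
    refine ⟨ζ * ξ, fun x y => ?_⟩
    simp only [Pi.mul_apply, hζ x y, hξ x y, mul_inv]
    simp only [mul_comm, mul_left_comm, mul_assoc]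
  inv_mem' := by
    rintro a ⟨ζ, hζ⟩
    refine ⟨ζ⁻¹, fun x y => ?_⟩
    simp only [Pi.inv_apply, hζ x y, mul_inv, inv_inv]

/-- The Schur multiplier `M(G) = Z²(G)/B²(G)`. -/
abbrev SchurM (G : Type*) [Group G] := ↥(Z2 G) ⧸ (B2 G).subgroupOf (Z2 G)

/-! ### Power maps into a central subgroup -/

/-- The map `x ↦ x ^ m` restricts to a homomorphism from the subgroup `A` into `Z`. -/
def PowHomInto {Γ : Type*} [Group Γ] (Z A : Subgroup Γ) (m : ℕ) : Prop :=
  (∀ x ∈ A, x ^ m ∈ Z) ∧ ∀ x ∈ A, ∀ y ∈ A, (x * y) ^ m = x ^ m * y ^ m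

/-- `Q` has a subgroup isomorphic to `C_e × C_e`, where `e` is the exponent of `Q`. -/
def HasSquare (Q : Type*) [Group Q] : Prop :=
  ∃ H : Subgroup Q, Nonempty (↥H ≃* (Multiplicative (ZMod (Monoid.exponent Q)) ×
        Multiplicative (ZMod (Monoid.exponent Q))))

lemma hasSquare_of_independent {Q : Type*} [Group Q] (hab : ∀ x y : Q, x * y = y * x)
    (he : Monoid.exponent Q ≠ 0) (x y : Q)
    (h : ∀ i j : ℕ, x ^ i * y ^ j = 1 → Monoid.exponent Q ∣ i ∧ Monoid.exponent Q ∣ j) :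
    HasSquare Q := by
  let _ : CommGroup Q := { (inferInstance : Group Q) with mul_comm := hab }
  unfold HasSquare
  have hpow : ∀ z : Q, z ^ Monoid.exponent Q = 1 := Monoid.pow_exponent_eq_one
  generalize Monoid.exponent Q = e at *
  have : NeZero e := ⟨he⟩
  let f : Q → (Multiplicative (ZMod e) →* Q) := fun z =>
    { toFun := fun i => z ^ (Multiplicative.toAdd i).val
      map_one' := by simp
      map_mul' := fun i j => by
        rw [toAdd_mul, ZMod.val_add, ← pow_add]
        exact (pow_eq_pow_mod _ (hpow z)).symm }
  let F := (f x).coprod (f y)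
  have hF : Function.Injective F := by
    rw [injective_iff_map_eq_one]
    rintro ⟨i, j⟩ hij
    obtain ⟨h1, h2⟩ := h (Multiplicative.toAdd i).val (Multiplicative.toAdd j).val hij
    have key : ∀ i : Multiplicative (ZMod e), e ∣ (Multiplicative.toAdd i).val → i = 1 := by
      intro i hi
      have : (Multiplicative.toAdd i).val = 0 := Nat.eq_zero_of_dvd_of_lt hi (ZMod.val_lt _)
      rw [ZMod.val_eq_zero] at this
      exact this
    rw [key i h1, key j h2]; rfl
  exact ⟨F.range, ⟨(MonoidHom.ofInjective hF).symm⟩⟩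

/-- If `c ^ e = 1` for a power `e` of `2` and `c ^ (e.choose 2) ≠ 1`, then `c` has order
exactly `e`. -/
lemma dvd_of_pow_choose_ne_one {Γ : Type*} [Group Γ] {c : Γ} {s : ℕ} (h1 : c ^ (2 ^ s) = 1)
    (h2 : c ^ ((2 ^ s).choose 2) ≠ 1) {i : ℕ} (hi : c ^ i = 1) : 2 ^ s ∣ i := by
  obtain ⟨t, hts, ht⟩ := (Nat.dvd_prime_pow Nat.prime_two).1 (orderOf_dvd_of_pow_eq_one h1)
  rcases hts.eq_or_lt with rfl | hlt
  · rw [← ht]; exact orderOf_dvd_of_pow_eq_one hi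
  · exfalso
    apply h2
    apply orderOf_dvd_iff_pow_eq_one.1
    rw [ht]
    obtain ⟨u, rfl⟩ : ∃ u, s = u + 1 := ⟨s - 1, by omega⟩
    have : (2 ^ (u + 1)).choose 2 = 2 ^ u * (2 ^ (u + 1) - 1) := by
      rw [Nat.choose_two_right, pow_succ, mul_right_comm, Nat.mul_div_cancel _ (by norm_num)]
    rw [this]
    exact (pow_dvd_pow 2 (by omega)).mul_right _

section Step

open scoped commutatorElement

variable {Γ : Type*} [Group Γ] {Z A B : Subgroup Γ} {m : ℕ}

lemma PowHomInto.conj (hZ : Z ≤ Subgroup.center Γ) (h : PowHomInto Z B m) {b : Γ} (hb : b ∈ B)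
    (g : Γ) : (g * b * g⁻¹) ^ m = b ^ m := by
  rw [conj_pow, Subgroup.mem_center_iff.1 (hZ (h.1 b hb)) g, mul_inv_cancel_right]

lemma PowHomInto.comm_mul (hZ : Z ≤ Subgroup.center Γ) (h : PowHomInto Z B m)
    (hn : ∀ g ∈ A, ∀ b ∈ B, g * b * g⁻¹ ∈ B) (hc : ∀ x ∈ A, ∀ y ∈ A, ⁅x, y⁆ ∈ B)
    {x x' y : Γ} (hx : x ∈ A) (hx' : x' ∈ A) (hy : y ∈ A) :
    ⁅x * x', y⁆ ^ m = ⁅x', y⁆ ^ m * ⁅x, y⁆ ^ m := by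
  have : ⁅x * x', y⁆ = (x * ⁅x', y⁆ * x⁻¹) * ⁅x, y⁆ := by
    simp only [commutatorElement_def]; group
  rw [this, h.2 _ (hn _ hx _ (hc _ hx' _ hy)) _ (hc _ hx _ hy), h.conj hZ (hc _ hx' _ hy)]

lemma PowHomInto.comm_pow (hZ : Z ≤ Subgroup.center Γ) (h : PowHomInto Z B m)
    (hn : ∀ g ∈ A, ∀ b ∈ B, g * b * g⁻¹ ∈ B) (hc : ∀ x ∈ A, ∀ y ∈ A, ⁅x, y⁆ ∈ B)
    {x y : Γ} (hx : x ∈ A) (hy : y ∈ A) (n : ℕ) :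
    ⁅x ^ n, y⁆ ^ m = (⁅x, y⁆ ^ m) ^ n := by
  induction n with
  | zero => simp
  | succ n ih =>
    rw [pow_succ', h.comm_mul hZ hn hc hx (pow_mem hx n) hy, ih, pow_succ]

lemma PowHomInto.comm_of_mem (hZ : Z ≤ Subgroup.center Γ) (h : PowHomInto Z B m)
    (hn : ∀ g ∈ A, ∀ b ∈ B, g * b * g⁻¹ ∈ B)
    {x y : Γ} (hx : x ∈ B) (hy : y ∈ A) : ⁅x, y⁆ ^ m = 1 := by
  have : ⁅x, y⁆ = x * (y * x⁻¹ * y⁻¹) := by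
    simp only [commutatorElement_def]; group
  rw [this, h.2 _ hx _ (hn _ hy _ (inv_mem hx)), h.conj hZ (inv_mem hx), inv_pow, mul_inv_cancel]

/-- Commutator collection in `A`, keeping track of the commutator part only through its
`m`-th power. -/
lemma PowHomInto.collect (hZ : Z ≤ Subgroup.center Γ) (h : PowHomInto Z B m)
    (hn : ∀ g ∈ A, ∀ b ∈ B, g * b * g⁻¹ ∈ B) (hc : ∀ x ∈ A, ∀ y ∈ A, ⁅x, y⁆ ∈ B)
    {x y : Γ} (hx : x ∈ A) (hy : y ∈ A) (n : ℕ) :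
    ∃ d ∈ B, (x * y) ^ n = x ^ n * y ^ n * d ∧ d ^ m = (⁅x, y⁆ ^ m)⁻¹ ^ (n.choose 2) := by
  induction n with
  | zero => exact ⟨1, one_mem _, by simp, by simp⟩
  | succ n ih =>
    obtain ⟨d, hd, h1, h2⟩ := ih
    have hk : ⁅y, x ^ n⁆ ∈ B := hc _ hy _ (pow_mem hx n)
    have hw : (x ^ n * y ^ (n + 1))⁻¹ ∈ A := inv_mem (mul_mem (pow_mem hx _) (pow_mem hy _))
    have hk' := hn _ hw _ hk
    refine ⟨_, mul_mem hk' hd, ?_, ?_⟩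
    · rw [pow_succ', h1, commutatorElement_def, pow_succ' x, pow_succ' y]
      group
    · rw [h.2 _ hk' _ hd, h.conj hZ hk, h2, ← commutatorElement_inv (x ^ n) y, inv_pow,
        h.comm_pow hZ hn hc hx hy, Nat.choose_succ_succ' n 1, Nat.choose_one_right, pow_add,
        inv_pow _ n]

open Classical in
/-- One step up the series: if the `m`-th power map is a homomorphism on `B`, then the
`(e * m)`-th power map, or the `(2 * e * m)`-th one if `A / B` contains `C_e × C_e`, is a
homomorphism on `A`, where `e` is the exponent of `A / B`. -/
lemma powHomInto_step {Q : Type*} [Group Q] (hab : ∀ x y : Q, x * y = y * x)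
    (hZ : Z ≤ Subgroup.center Γ) (h : PowHomInto Z B m) (hBA : B ≤ A)
    (ψ : ↥A →* Q) (hψ : ∀ a : A, ψ a = 1 ↔ (a : Γ) ∈ B)
    (s : ℕ) (hs : Monoid.exponent Q = 2 ^ s) :
    PowHomInto Z A ((Monoid.exponent Q * if HasSquare Q then 2 else 1) * m) := by
  have hn : ∀ g ∈ A, ∀ b ∈ B, g * b * g⁻¹ ∈ B := by
    intro g hg b hb
    have := (hψ ⟨b, hBA hb⟩).2 hb
    refine (hψ (⟨g, hg⟩ * ⟨b, hBA hb⟩ * ⟨g, hg⟩⁻¹)).1 ?_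
    rw [map_mul, map_mul, this, mul_one, map_inv, mul_inv_cancel]
  have hc : ∀ x ∈ A, ∀ y ∈ A, ⁅x, y⁆ ∈ B := by
    intro x hx y hy
    refine (hψ ⁅(⟨x, hx⟩ : A), (⟨y, hy⟩ : A)⁆).1 ?_
    rw [map_commutatorElement, commutatorElement_eq_one_iff_mul_comm]
    exact hab _ _
  have hpow : ∀ x ∈ A, x ^ Monoid.exponent Q ∈ B := by
    intro x hx
    refine (hψ (⟨x, hx⟩ ^ Monoid.exponent Q)).1 ?_
    rw [map_pow, Monoid.pow_exponent_eq_one]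
  have hce : ∀ x ∈ A, ∀ y ∈ A, (⁅x, y⁆ ^ m) ^ Monoid.exponent Q = 1 := by
    intro x hx y hy
    rw [← h.comm_pow hZ hn hc hx hy, h.comm_of_mem hZ hn (hpow x hx) hy]
  set E := Monoid.exponent Q * if HasSquare Q then 2 else 1 with hE
  have hEB : ∀ x ∈ A, x ^ E ∈ B := fun x hx => by
    rw [hE, pow_mul]; exact pow_mem (hpow x hx) _
  have hch : ∀ x ∈ A, ∀ y ∈ A, (⁅x, y⁆ ^ m) ^ (E.choose 2) = 1 := by
    intro x hx y hy
    by_cases hsq : HasSquare Q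
    · have : E.choose 2 = Monoid.exponent Q * (E - 1) := by
        rw [Nat.choose_two_right, hE, if_pos hsq, mul_right_comm,
          Nat.mul_div_cancel _ (by norm_num)]
      rw [this, pow_mul, hce x hx y hy, one_pow]
    · rw [hE, if_neg hsq, mul_one]
      by_contra hne
      -- the commutator value has order `e`, so the images of `x` and `y` are independent
      have hdvd : ∀ i : ℕ, (⁅x, y⁆ ^ m) ^ i = 1 → Monoid.exponent Q ∣ i := by
        intro i hi
        have h1 := hce x hx y hy
        rw [hs] at h1 hne ⊢
        exact dvd_of_pow_choose_ne_one h1 hne hi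
      refine hsq (hasSquare_of_independent hab (by rw [hs]; positivity)
        (ψ ⟨x, hx⟩) (ψ ⟨y, hy⟩) fun i j hij => ?_)
      have hB : x ^ i * y ^ j ∈ B := by
        refine (hψ (⟨x, hx⟩ ^ i * ⟨y, hy⟩ ^ j)).1 ?_
        rw [map_mul, map_pow, map_pow, hij]
      constructor <;> apply hdvd
      · have := h.comm_of_mem hZ hn hB hy
        rwa [h.comm_mul hZ hn hc (pow_mem hx i) (pow_mem hy j) hy, h.comm_pow hZ hn hc hx hy,
          h.comm_pow hZ hn hc hy hy, commutatorElement_self, one_pow, one_pow, one_mul] at this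
      · have := h.comm_of_mem hZ hn hB hx
        rwa [h.comm_mul hZ hn hc (pow_mem hx i) (pow_mem hy j) hx, h.comm_pow hZ hn hc hx hx,
          h.comm_pow hZ hn hc hy hx, commutatorElement_self, one_pow, one_pow, mul_one,
          ← commutatorElement_inv x y, inv_pow, inv_pow, inv_eq_one] at this
  refine ⟨fun x hx => ?_, fun x hx y hy => ?_⟩
  · rw [pow_mul]; exact h.1 _ (hEB x hx)
  · obtain ⟨d, hd, h1, h2⟩ := h.collect hZ hn hc hx hy E
    rw [inv_pow, hch x hx y hy, inv_one] at h2
    rw [pow_mul, h1, h.2 _ (mul_mem (hEB x hx) (hEB y hy)) _ hd, h2, mul_one,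
      h.2 _ (hEB x hx) _ (hEB y hy), ← pow_mul, ← pow_mul]

end Step

/-! ### The central extension defined by a cocycle -/

/-- The central extension of `G` by `ℂˣ` with factor set `α`, on the underlying set `G × ℂˣ`. The
cocycle is not assumed normalized, so the identity is `(1, α(1, 1)⁻¹)`. -/
@[ext]
structure CocycleExt {G : Type*} [Group G] (α : Z2 G) where
  /-- The image in `G`. -/
  base : G
  /-- The `ℂˣ`-coordinate. -/
  val : ℂˣ

namespace CocycleExt

variable {G : Type*} [Group G] {α : Z2 G}

instance : Mul (CocycleExt α) := ⟨fun x y => ⟨x.base * y.base, x.val * y.val * α.1 x.base y.base⟩⟩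
instance : One (CocycleExt α) := ⟨⟨1, (α.1 1 1)⁻¹⟩⟩
instance : Inv (CocycleExt α) :=
  ⟨fun x => ⟨x.base⁻¹, x.val⁻¹ * (α.1 x.base⁻¹ x.base)⁻¹ * (α.1 1 1)⁻¹⟩⟩

@[simp] lemma mul_base (x y : CocycleExt α) : (x * y).base = x.base * y.base := rfl
@[simp] lemma mul_val (x y : CocycleExt α) :
    (x * y).val = x.val * y.val * α.1 x.base y.base := rfl
@[simp] lemma one_base : (1 : CocycleExt α).base = 1 := rfl
@[simp] lemma one_val : (1 : CocycleExt α).val = (α.1 1 1)⁻¹ := rfl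
@[simp] lemma inv_base (x : CocycleExt α) : x⁻¹.base = x.base⁻¹ := rfl
@[simp] lemma inv_val (x : CocycleExt α) :
    x⁻¹.val = x.val⁻¹ * (α.1 x.base⁻¹ x.base)⁻¹ * (α.1 1 1)⁻¹ := rfl

lemma cocycle (α : Z2 G) (x y z : G) :
    α.1 x y * α.1 (x * y) z = α.1 x (y * z) * α.1 y z := α.2 x y z

lemma one_left (α : Z2 G) (x : G) : α.1 1 x = α.1 1 1 := by
  have := cocycle α 1 1 x
  simp only [one_mul] at this
  exact (mul_right_cancel this).symm

lemma one_right (α : Z2 G) (x : G) : α.1 x 1 = α.1 1 1 := by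
  have := cocycle α x 1 1
  simp only [mul_one] at this
  exact mul_left_cancel this

instance : Group (CocycleExt α) :=
  Group.ofLeftAxioms
    (by
      intro x y z
      ext1
      · simp [mul_assoc]
      · have := cocycle α x.base y.base z.base
        simp only [mul_val, mul_base]
        calc _ = x.val * y.val * z.val * (α.1 x.base y.base * α.1 (x.base * y.base) z.base) := by
              simp only [mul_comm, mul_left_comm, mul_assoc]
          _ = _ := by
              rw [this]
              simp only [mul_comm, mul_left_comm, mul_assoc])
    (by
      intro x
      ext1
      · simp
      · simp [one_left, mul_comm, mul_left_comm])
    (by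
      intro x
      ext1
      · simp
      · simp only [mul_val, inv_val, inv_base, one_val]
        rw [mul_right_comm _ _ x.val, mul_right_comm _ _ x.val, inv_mul_cancel, one_mul,
          mul_right_comm, inv_mul_cancel, one_mul])

/-- The projection onto `G`. -/
def proj (α : Z2 G) : CocycleExt α →* G where
  toFun := base
  map_one' := rfl
  map_mul' _ _ := rfl

@[simp] lemma proj_apply (x : CocycleExt α) : proj α x = x.base := rfl

/-- The embedding of `ℂˣ` as the kernel of the projection. -/
def incl (α : Z2 G) : ℂˣ →* CocycleExt α where
  toFun z := ⟨1, z * (α.1 1 1)⁻¹⟩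
  map_one' := by ext1 <;> simp
  map_mul' a b := by
    ext1
    · simp
    · simp [mul_assoc, mul_comm, mul_left_comm]

lemma incl_injective : Function.Injective (incl α) := fun a b h => by
  have := congrArg val h
  exact mul_right_cancel this

lemma incl_mul (z : ℂˣ) (x : CocycleExt α) : incl α z * x = ⟨x.base, z * x.val⟩ := by
  ext1
  · simp [incl]
  · simp [incl, one_left, mul_comm, mul_left_comm]

lemma mul_incl (z : ℂˣ) (x : CocycleExt α) : x * incl α z = ⟨x.base, z * x.val⟩ := by
  ext1
  · simp [incl]
  · simp [incl, one_right, mul_comm, mul_left_comm]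

lemma range_incl_le_center : (incl α).range ≤ Subgroup.center (CocycleExt α) := by
  rintro _ ⟨z, rfl⟩
  rw [Subgroup.mem_center_iff]
  intro g
  rw [incl_mul, mul_incl]

lemma mem_range_incl {x : CocycleExt α} (hx : x.base = 1) : x ∈ (incl α).range :=
  ⟨x.val * α.1 1 1, by ext1 <;> simp [incl, hx]⟩

end CocycleExt

/-! ### Inflation -/

open CocycleExt in
/-- If the `M`-th power map is a homomorphism from the preimage of `ker p` in the central
extension to `ℂˣ`, then `α ^ M` is cohomologous to the inflation of a cocycle on `Q`. -/
lemma exists_inflation {G Q : Type*} [Group G] [Group Q] (p : G →* Q)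
    (hp : Function.Surjective p) (α : Z2 G) (M : ℕ)
    (h : PowHomInto (incl α).range (p.ker.comap (proj α)) M) :
    ∃ (β : Z2 Q) (ζ : G → ℂˣ), ∀ x y : G,
      α.1 x y ^ M = β.1 (p x) (p y) * (ζ x * ζ y * (ζ (x * y))⁻¹) := by
  set A := p.ker.comap (proj α) with hA
  have memA : ∀ x : CocycleExt α, x ∈ A ↔ p x.base = 1 := fun x => Iff.rfl
  -- `f` is the power map read in `ℂˣ`; its values off `A` are irrelevant
  have hf : ∃ f : CocycleExt α → ℂˣ, ∀ x ∈ A, incl α (f x) = x ^ M := by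
    refine ⟨fun x => (x ^ M).val * α.1 1 1, fun x hx => ?_⟩
    obtain ⟨z, hz⟩ := h.1 x hx
    simp [← hz, incl]
  obtain ⟨f, hf⟩ := hf
  have f_mul : ∀ x ∈ A, ∀ y ∈ A, f (x * y) = f x * f y := by
    intro x hx y hy
    apply incl_injective (α := α)
    rw [map_mul, hf _ hx, hf _ hy, hf _ (mul_mem hx hy), h.2 x hx y hy]
  have conjA : ∀ x ∈ A, ∀ g, g⁻¹ * x * g ∈ A := by
    intro x hx g
    rw [memA] at hx ⊢
    simp [hx]
  have f_conj : ∀ x ∈ A, ∀ g, f (g⁻¹ * x * g) = f x := by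
    intro x hx g
    apply incl_injective (α := α)
    rw [hf _ hx, hf _ (conjA x hx g)]
    have := h.conj range_incl_le_center hx g⁻¹
    rwa [inv_inv] at this
  have f_incl : ∀ z : ℂˣ, f (incl α z) = z ^ M := by
    intro z
    apply incl_injective (α := α)
    rw [hf _ (by rw [memA]; simp [incl]), map_pow]
  have inclA : ∀ z : ℂˣ, incl α z ∈ A := fun z => by rw [memA]; simp [incl]
  obtain ⟨s, hs⟩ : ∃ s : Q → CocycleExt α, ∀ q, p (s q).base = q :=
    ⟨fun q => ⟨(hp q).choose, 1⟩, fun q => (hp q).choose_spec⟩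
  let a : Q → Q → CocycleExt α := fun q q' => (s (q * q'))⁻¹ * (s q * s q')
  have ha : ∀ q q', a q q' ∈ A := fun q q' => by
    rw [memA]; simp [a, hs]
  let b : G → CocycleExt α := fun x => (s (p x))⁻¹ * ⟨x, 1⟩
  have hb : ∀ x, b x ∈ A := fun x => by
    rw [memA]; simp [b, hs]
  have hβ : (fun q q' => f (a q q')) ∈ Z2 Q := by
    intro q q' q''
    have key : a (q * q') q'' * ((s q'')⁻¹ * a q q' * s q'') = a q (q' * q'') * a q' q'' := by
      simp only [a, mul_assoc q q' q'']
      group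
    have := congrArg f key
    rw [f_mul _ (ha _ _) _ (conjA _ (ha _ _) _), f_mul _ (ha _ _) _ (ha _ _),
      f_conj _ (ha _ _)] at this
    rw [mul_comm]
    exact this
  refine ⟨⟨_, hβ⟩, fun x => f (b x), fun x y => ?_⟩
  have ht : (⟨x, 1⟩ * ⟨y, 1⟩ : CocycleExt α) = ⟨x * y, 1⟩ * incl α (α.1 x y) := by
    rw [mul_incl]
    ext1 <;> simp
  have key : a (p x) (p y) * ((s (p y))⁻¹ * b x * s (p y)) * b y
      = b (x * y) * incl α (α.1 x y) := by
    simp only [a, b, map_mul]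
    rw [mul_assoc (s (p x * p y))⁻¹ ⟨x * y, 1⟩, ← ht]
    group
  have := congrArg f key
  rw [f_mul _ (mul_mem (ha _ _) (conjA _ (hb _) _)) _ (hb _),
    f_mul _ (ha _ _) _ (conjA _ (hb _) _), f_conj _ (hb _), f_mul _ (hb _) _ (inclA _),
    f_incl] at this
  change _ = f (a (p x) (p y)) * _
  rw [← mul_assoc, ← mul_assoc, this, mul_right_comm, mul_inv_cancel, one_mul]

lemma exponent_dvd_of_forall_inflation {G Q : Type*} [Group G] [Group Q] (p : G →* Q) (M : ℕ)
    (h : ∀ α : Z2 G, ∃ (β : Z2 Q) (ζ : G → ℂˣ), ∀ x y : G,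
      α.1 x y ^ M = β.1 (p x) (p y) * (ζ x * ζ y * (ζ (x * y))⁻¹)) :
    Monoid.exponent (SchurM G) ∣ M * Monoid.exponent (SchurM Q) := by
  apply Monoid.exponent_dvd_of_forall_pow_eq_one
  intro c
  induction c using QuotientGroup.induction_on with
  | H α =>
  obtain ⟨β, ζ, hβ⟩ := h α
  have h1 : (QuotientGroup.mk β : SchurM Q) ^ Monoid.exponent (SchurM Q) = 1 :=
    Monoid.pow_exponent_eq_one _
  generalize Monoid.exponent (SchurM Q) = n at *
  rw [← QuotientGroup.mk_pow, QuotientGroup.eq_one_iff, Subgroup.mem_subgroupOf] at h1 ⊢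
  obtain ⟨ξ, hξ⟩ := h1
  refine ⟨fun x => ξ (p x) * ζ x ^ n, fun x y => ?_⟩
  have h2 : β.1 (p x) (p y) ^ n = ξ (p x) * ξ (p y) * (ξ (p x * p y))⁻¹ := hξ (p x) (p y)
  change α.1 x y ^ (M * n) = _
  rw [pow_mul, hβ, mul_pow, h2]
  simp only [map_mul, mul_pow, mul_inv, inv_pow]
  simp only [mul_comm, mul_left_comm, mul_assoc]

/-- Let `G` be a finite `2`-group with a subnormal series
`G = G₀ > G₁ > ⋯ > G_r = 1` whose factors `Q i = G_{i-1}/G_i` (realized as groups `Q i`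
with surjections `↥(GG i) → Q i` with kernel `GG (i+1)`) are all abelian.  Let `I` be the
set of indices `k ≥ 2` (i.e. `k ≠ 0` in our `Fin r` indexing of `Q₁, …, Q_r`) such that
`Q k` has a subgroup isomorphic to `C_{e_k} × C_{e_k}` with `e_k = exp (Q k)`.  Then
`exp M(G)` divides `2^{|I|} · (∏_{j=2}^r exp Q_j) · exp M(Q₁)`. -/
theorem exponent_schurMultiplier_dvd_of_abelian_subnormal_series
    (G : Type*) [Group G] [Finite G] (hG : IsPGroup 2 G)
    (r : ℕ) (hr : 0 < r) (GG : Fin (r + 1) → Subgroup G)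
    (htop : GG 0 = ⊤) (hbot : GG (Fin.last r) = ⊥) (hanti : StrictAnti GG)
    (Q : Fin r → Type*) [∀ i, Group (Q i)]
    (φ : ∀ i : Fin r, ↥(GG i.castSucc) →* Q i)
    (hsurj : ∀ i, Function.Surjective (φ i))
    (hker : ∀ i, (φ i).ker = (GG i.succ).subgroupOf (GG i.castSucc))
    (hab : ∀ i, ∀ x y : Q i, x * y = y * x)
    (I : Finset (Fin r))
    (hI : ∀ k : Fin r, k ∈ I ↔ (k ≠ ⟨0, hr⟩ ∧ ∃ H : Subgroup (Q k),
      Nonempty (↥H ≃* (Multiplicative (ZMod (Monoid.exponent (Q k))) ×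
        Multiplicative (ZMod (Monoid.exponent (Q k))))))) :
    Monoid.exponent (SchurM G) ∣
      2 ^ I.card *
        (∏ i ∈ Finset.univ.filter (fun i : Fin r => i ≠ ⟨0, hr⟩), Monoid.exponent (Q i)) *
          Monoid.exponent (SchurM (Q ⟨0, hr⟩)) := by
  classical
  let E : Fin r → ℕ := fun j => Monoid.exponent (Q j) * if HasSquare (Q j) then 2 else 1
  set i₀ : Fin r := ⟨0, hr⟩ with hi₀
  have hcast : i₀.castSucc = 0 := rfl
  have htop' : GG i₀.castSucc = ⊤ := by rw [hcast, htop]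
  have hM : 2 ^ I.card * (∏ i ∈ Finset.univ.filter (fun i : Fin r => i ≠ i₀),
      Monoid.exponent (Q i)) = ∏ j ∈ Finset.univ.filter (fun j => i₀.succ ≤ j.castSucc), E j := by
    have h1 : Finset.univ.filter (fun j : Fin r => i₀.succ ≤ j.castSucc)
        = Finset.univ.filter (fun i : Fin r => i ≠ i₀) := by
      ext j
      simp [Fin.le_def, Fin.ext_iff, hi₀]
      omega
    have h2 : I = (Finset.univ.filter (fun i : Fin r => i ≠ i₀)).filter
        (fun j => HasSquare (Q j)) := by
      ext j
      simp only [hI, Finset.mem_filter, Finset.mem_univ, true_and]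
      rfl
    rw [h1, Finset.prod_mul_distrib, ← Finset.prod_filter, ← h2, Finset.prod_const, mul_comm]
  have hexp : ∀ i, ∃ s, Monoid.exponent (Q i) = 2 ^ s := by
    intro i
    have : Finite (Q i) := Finite.of_surjective _ (hsurj i)
    have hQ : IsPGroup 2 (Q i) := (hG.to_subgroup _).of_surjective (φ i) (hsurj i)
    obtain ⟨n, hn⟩ := IsPGroup.iff_card.1 hQ
    have hd : Monoid.exponent (Q i) ∣ 2 ^ n := hn ▸ Group.exponent_dvd_nat_card
    obtain ⟨s, -, hs⟩ := (Nat.dvd_prime_pow Nat.prime_two).1 hd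
    exact ⟨s, hs⟩
  have hkey : ∀ (α : Z2 G) (i : Fin (r + 1)),
      PowHomInto (CocycleExt.incl α).range ((GG i).comap (CocycleExt.proj α))
        (∏ j ∈ Finset.univ.filter (fun j => i ≤ j.castSucc), E j) := by
    intro α i
    induction i using Fin.reverseInduction with
    | last =>
      have : Finset.univ.filter (fun j : Fin r => Fin.last r ≤ j.castSucc) = ∅ := by
        ext j
        simp [Fin.le_def]
      rw [this, Finset.prod_empty, hbot]
      refine ⟨fun x hx => ?_, fun x _ y _ => by simp⟩
      rw [pow_one]
      exact CocycleExt.mem_range_incl hx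
    | cast i ih =>
      have : Finset.univ.filter (fun j : Fin r => i.castSucc ≤ j.castSucc)
          = insert i (Finset.univ.filter (fun j : Fin r => i.succ ≤ j.castSucc)) := by
        ext j
        simp only [Finset.mem_insert, Finset.mem_filter, Finset.mem_univ, true_and, Fin.le_def,
          Fin.ext_iff, Fin.val_castSucc, Fin.val_succ]
        omega
      rw [this, Finset.prod_insert (by simp [Fin.le_def])]
      obtain ⟨s, hs⟩ := hexp i
      refine powHomInto_step (hab i) CocycleExt.range_incl_le_center ih
        (Subgroup.comap_mono (hanti (Fin.castSucc_lt_succ (i := i))).le)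
        ((φ i).comp ((CocycleExt.proj α).subgroupComap _)) (fun a => ?_) s hs
      rw [MonoidHom.comp_apply, ← MonoidHom.mem_ker, hker]
      rfl
  rw [hM]
  let p : G →* Q i₀ := (φ i₀).comp
    ((MonoidHom.id G).codRestrict (GG i₀.castSucc) fun x => htop' ▸ Subgroup.mem_top x)
  have hp : Function.Surjective p := by
    intro q
    obtain ⟨g, rfl⟩ := hsurj i₀ q
    exact ⟨g.1, rfl⟩
  have hpk : p.ker = GG i₀.succ := by
    ext x
    rw [MonoidHom.mem_ker, MonoidHom.comp_apply, ← MonoidHom.mem_ker, hker]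
    rfl
  refine exponent_dvd_of_forall_inflation p _ fun α => exists_inflation p hp α _ ?_
  rw [hpk]
  exact hkey α _
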